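/- arXiv:1806.07953 — 2 statements merged into one kernel-verified Lean document; each statement's English description precedes it below -/
import Mathlib

section
/- Let α ≥ 1 and let d be the Carnot–Carathéodory distance on ℝ³ induced by X₁ and X₂. There exists a constant C₀ > 0, depending only on α, such that for all p, q ∈ ℝ³ one has C₀⁻¹ δ(p,q) ≤ d(p,q) ≤ C₀ δ(p,q). -/
open MeasureTheory

/-- The minimum appearing in the quasi-distance `δ`, with the conventions of the paper:
it equals `|ζ| ^ (1/(α+1))` when `x = 0` (and it is `0` when `ζ = 0`). -/
noncomputable def ccMin (α x ζ : ℝ) : ℝ :=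
  if x = 0 then |ζ| ^ (1 / (α + 1))
  else min (|ζ| ^ (1 / (α + 1))) (|ζ| ^ ((1 : ℝ) / 2) / |x| ^ ((α - 1) / 2))

/-- A horizontal curve on `[0,T]` for the vector fields `X₁ = ∂ₓ`, `X₂ = ∂_y + |x|^α ∂_z`:
a Lipschitz curve whose components have a.e. derivatives `(h₁, h₂, |x|^α h₂)` with
`h₁² + h₂² ≤ 1`. -/
def IsHorizontal (α T : ℝ) (γ : ℝ → ℝ × ℝ × ℝ) : Prop :=
  (∃ K, LipschitzOnWith K γ (Set.Icc 0 T)) ∧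
  ∃ h₁ h₂ : ℝ → ℝ, Measurable h₁ ∧ Measurable h₂ ∧
    (∀ t, (h₁ t) ^ 2 + (h₂ t) ^ 2 ≤ 1) ∧
    ∀ᵐ t ∂(volume.restrict (Set.Ioo 0 T)),
      HasDerivAt (fun s => (γ s).1) (h₁ t) t ∧
      HasDerivAt (fun s => (γ s).2.1) (h₂ t) t ∧
      HasDerivAt (fun s => (γ s).2.2) (|(γ t).1| ^ α * h₂ t) t

/-- The Carnot–Carathéodory distance associated with `X₁, X₂`. -/
noncomputable def ccDist (α : ℝ) (p q : ℝ × ℝ × ℝ) : ℝ :=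
  sInf {T : ℝ | 0 < T ∧ ∃ γ : ℝ → ℝ × ℝ × ℝ, IsHorizontal α T γ ∧ γ 0 = p ∧ γ T = q}

/-- The Carnot–Carathéodory ball. -/
def ccBall (α : ℝ) (p : ℝ × ℝ × ℝ) (r : ℝ) : Set (ℝ × ℝ × ℝ) :=
  {q | ccDist α p q < r}

/-- The algebraic quasi-distance `δ`. -/
noncomputable def deltaDist (α : ℝ) (p q : ℝ × ℝ × ℝ) : ℝ :=
  |q.1 - p.1| + |q.2.1 - p.2.1| +
    ccMin α p.1 (p.2.2 - q.2.2 + |p.1| ^ α * (q.2.1 - p.2.1))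

/-- The perimeter measure `μ = |x|^α ℒ²` on the plane `z = 0`, identified with `ℝ²`. -/
noncomputable def planeMeasure (α : ℝ) : Measure (ℝ × ℝ) :=
  volume.withDensity (fun u => ENNReal.ofReal (|u.1| ^ α))

/-!
Let `ζ` be the vertical defect left after following `X₂` from `p` until the `y`-coordinates agree.
The last summand of `δ` is the solution `r` of `r² max(r, |x|)^(α-1) = |ζ|`, which is
the scaling relation between the side `r` of a rectangular loop in the `(x, y)`-plane based at
abscissa `x` and the height `ζ` gained by lifting that loop to a horizontal curve.

Upper bound: follow `X₂`, correct the height by the lift of a loop with sides at most `r`, and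
follow `X₁`. Lower bound: on a horizontal curve of duration `T` the abscissa stays within `T` of
its initial value `x₀`, so `z - |x₀|^α y` has velocity at most `α (|x₀| + T)^(α-1) T`, and the
height it gains is comparable to that of a loop of side `T`.
-/

open Set

section Calculus

theorem abs_sub_le_mul_of_ae_abs_deriv_le {f : ℝ → ℝ} {a b M : ℝ}
    (hf : AbsolutelyContinuousOnInterval f a b)
    (hM : ∀ᵐ t ∂volume.restrict (uIoc a b), |deriv f t| ≤ M) :
    |f b - f a| ≤ M * |b - a| := by
  rw [← hf.integral_deriv_eq_sub]
  exact intervalIntegral.norm_integral_le_of_norm_le_const_ae (f := deriv f)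
    ((ae_restrict_iff' measurableSet_uIoc).1 hM)

theorem hasDerivAt_prod_iff {𝕜 E F : Type*} [NontriviallyNormedField 𝕜]
    [NormedAddCommGroup E] [NormedSpace 𝕜 E] [NormedAddCommGroup F] [NormedSpace 𝕜 F]
    {f : 𝕜 → E × F} {v : E × F} {t : 𝕜} :
    HasDerivAt f v t ↔
      HasDerivAt (fun s => (f s).1) v.1 t ∧ HasDerivAt (fun s => (f s).2) v.2 t :=
  ⟨fun h => ⟨(ContinuousLinearMap.fst 𝕜 E F).hasFDerivAt.comp_hasDerivAt t h,
      (ContinuousLinearMap.snd 𝕜 E F).hasFDerivAt.comp_hasDerivAt t h⟩,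
    fun h => h.1.prodMk h.2⟩

theorem abs_abs_rpow_sub_abs_rpow_le {α a b M : ℝ} (hα : 1 ≤ α) (ha : |a| ≤ M) (hb : |b| ≤ M) :
    |(|a| ^ α - |b| ^ α)| ≤ α * M ^ (α - 1) * |a - b| := by
  have hderiv : ∀ t ∈ Icc 0 M, ‖α * t ^ (α - 1)‖ ≤ α * M ^ (α - 1) := fun t ht => by
    have := Real.rpow_nonneg ht.1 (α - 1)
    rw [Real.norm_of_nonneg (by positivity)]
    gcongr <;> linarith [ht.1, ht.2]
  have hM : 0 ≤ M := (abs_nonneg a).trans ha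
  calc |(|a| ^ α - |b| ^ α)|
      ≤ α * M ^ (α - 1) * |(|a| - |b|)| :=
        (convex_Icc 0 M).norm_image_sub_le_of_norm_hasDerivWithin_le
          (fun t _ => (Real.hasDerivAt_rpow_const (Or.inr hα)).hasDerivWithinAt) hderiv
          ⟨abs_nonneg b, hb⟩ ⟨abs_nonneg a, ha⟩
    _ ≤ α * M ^ (α - 1) * |a - b| := by gcongr ?_ * ?_; exact abs_abs_sub_abs_le a b

theorem mul_max_rpow_le_add_rpow_sub_rpow {α a b : ℝ} (hα : 1 ≤ α) (ha : 0 ≤ a) (hb : 0 ≤ b) :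
    b * max b a ^ (α - 1) ≤ (a + b) ^ α - a ^ α := by
  have split : ∀ u : ℝ, 0 ≤ u → u ^ α = u ^ (α - 1) * u := fun u hu => by
    rw [← Real.rpow_add_one' hu (by linarith), sub_add_cancel]
  have hmax : max b a ^ (α - 1) ≤ (a + b) ^ (α - 1) := by
    gcongr
    exact max_le (by linarith) (by linarith)
  have hmono : a ^ (α - 1) ≤ (a + b) ^ (α - 1) := by
    gcongr
    linarith
  rw [split _ (add_nonneg ha hb), split a ha]
  linarith [mul_le_mul_of_nonneg_left hmax hb, mul_le_mul_of_nonneg_left hmono ha]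

end Calculus

section Concatenation

/-- The curve that follows `γ` up to time `T` and then `η`, translated so as to start at `γ T`.
Writing it as a sum of two stopped curves makes it visibly Lipschitz. -/
def concatAt {E : Type*} [AddCommGroup E] (T : ℝ) (γ η : ℝ → E) (t : ℝ) : E :=
  γ (min t T) + (η (max (t - T) 0) - η 0)

theorem concatAt_of_le {E : Type*} [AddCommGroup E] {γ η : ℝ → E} {T t : ℝ} (ht : t ≤ T) :
    concatAt T γ η t = γ t := by
  simp [concatAt, ht]

theorem concatAt_of_ge {E : Type*} [AddCommGroup E] {γ η : ℝ → E} {T t : ℝ} (h : γ T = η 0)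
    (ht : T ≤ t) : concatAt T γ η t = η (t - T) := by
  simp [concatAt, ht, h]

theorem lipschitzOnWith_concatAt {E : Type*} [SeminormedAddCommGroup E] {γ η : ℝ → E}
    {K L : NNReal} {S T : ℝ} (hS : 0 ≤ S) (hT : 0 ≤ T) (hγ : LipschitzOnWith K γ (Icc 0 S))
    (hη : LipschitzOnWith L η (Icc 0 T)) :
    LipschitzOnWith (K + L) (concatAt S γ η) (Icc 0 (S + T)) := by
  have hmin : LipschitzOnWith 1 (fun t => min t S) (Icc 0 (S + T)) :=
    (LipschitzWith.id.min_const S).lipschitzOnWith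
  have hmax : LipschitzOnWith 1 (fun t => max (t - S) 0) (Icc 0 (S + T)) :=
    ((IsometryEquiv.subRight S).isometry.lipschitz.max_const 0).lipschitzOnWith
  have hη' : LipschitzOnWith L (fun t => η t - η 0) (Icc 0 T) :=
    fun s hs t ht => by simpa only [edist_sub_right] using hη hs ht
  simpa only [mul_one] using!
    (hγ.comp hmin fun t ht => ⟨le_min ht.1 hS, min_le_right t S⟩).add
      (hη'.comp hmax fun t ht => ⟨le_max_right _ _, max_le (by linarith [ht.2]) hT⟩)

variable {E : Type*} [NormedAddCommGroup E] [NormedSpace ℝ E] {γ η : ℝ → E} {v : E} {T t : ℝ}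

theorem hasDerivAt_concatAt_of_lt (ht : t < T) (hγ : HasDerivAt γ v t) :
    HasDerivAt (concatAt T γ η) v t :=
  hγ.congr_of_eventuallyEq <| by
    filter_upwards [Iio_mem_nhds ht] with s hs using concatAt_of_le (le_of_lt hs)

theorem hasDerivAt_concatAt_of_gt (h : γ T = η 0) (ht : T < t) (hη : HasDerivAt η v (t - T)) :
    HasDerivAt (concatAt T γ η) v t :=
  (hη.comp_sub_const t T).congr_of_eventuallyEq <| by
    filter_upwards [Ioi_mem_nhds ht] with s hs using concatAt_of_ge h (le_of_lt hs)

end Concatenation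

section QuasiDistance

variable {α x ζ r : ℝ}

theorem ccMin_nonneg (α x ζ : ℝ) : 0 ≤ ccMin α x ζ := by
  unfold ccMin
  split_ifs <;> positivity

theorem deltaDist_nonneg (α : ℝ) (p q : ℝ × ℝ × ℝ) : 0 ≤ deltaDist α p q :=
  add_nonneg (by positivity) (ccMin_nonneg _ _ _)

theorem rpow_half_div_rpow_half_le_iff {u c β : ℝ} (hc : 0 < c) (hr : 0 ≤ r) :
    u ^ ((1 : ℝ) / 2) / c ^ (β / 2) ≤ r ↔ u ≤ r ^ 2 * c ^ β := by
  have hsq : (c ^ (β / 2)) ^ 2 = c ^ β := by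
    rw [← Real.rpow_mul_natCast hc.le, Nat.cast_ofNat, div_mul_cancel₀ _ two_ne_zero]
  rw [div_le_iff₀ (by positivity), ← Real.sqrt_eq_rpow, Real.sqrt_le_left (by positivity),
    mul_pow, hsq]

theorem ccMin_le_iff (hα : 1 ≤ α) (hr : 0 ≤ r) :
    ccMin α x ζ ≤ r ↔ |ζ| ≤ r ^ 2 * max r |x| ^ (α - 1) := by
  have hpow : |ζ| ^ (1 / (α + 1)) ≤ r ↔ |ζ| ≤ r ^ 2 * r ^ (α - 1) := by
    rw [one_div, Real.rpow_inv_le_iff_of_pos (abs_nonneg ζ) hr (by linarith), ← Real.rpow_two,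
      ← Real.rpow_add_of_nonneg hr zero_le_two (sub_nonneg.2 hα)]
    ring_nf
  unfold ccMin
  split_ifs with hx
  · rw [hpow, hx, abs_zero, max_eq_left hr]
  · rw [min_le_iff, hpow, rpow_half_div_rpow_half_le_iff (abs_pos.2 hx) hr,
      (Real.monotoneOn_rpow_Ici_of_exponent_nonneg (sub_nonneg.2 hα)).map_max hr (abs_nonneg x),
      mul_max_of_nonneg _ _ (sq_nonneg r), le_max_iff]

theorem ccMin_le_of_abs_le {T : ℝ} (hα : 1 ≤ α) (hT : 0 ≤ T)
    (hζ : |ζ| ≤ α * (|x| + T) ^ (α - 1) * T * T) :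
    ccMin α x ζ ≤ α * 2 ^ (α - 1) * T := by
  set A := α * 2 ^ (α - 1) with hA
  have hA1 : 1 ≤ A :=
    one_le_mul_of_one_le_of_one_le hα (Real.one_le_rpow one_le_two (sub_nonneg.2 hα))
  have hTA : T ≤ A * T := le_mul_of_one_le_left hT hA1
  have hmax : |x| + T ≤ 2 * max (A * T) |x| := by
    linarith [le_max_left (A * T) |x|, le_max_right (A * T) |x|]
  rw [ccMin_le_iff hα (by positivity)]
  calc |ζ| ≤ α * (|x| + T) ^ (α - 1) * T * T := hζ
    _ ≤ α * (2 * max (A * T) |x|) ^ (α - 1) * T * T := by gcongr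
    _ = (A * T) * T * max (A * T) |x| ^ (α - 1) := by
      rw [Real.mul_rpow zero_le_two (by positivity), hA]
      ring
    _ ≤ (A * T) * (A * T) * max (A * T) |x| ^ (α - 1) := by gcongr
    _ = (A * T) ^ 2 * max (A * T) |x| ^ (α - 1) := by rw [sq]

end QuasiDistance

section HorizontalCurves

/-- The value at `p` of the horizontal vector field `a X₁ + b X₂`. -/
noncomputable def horizontalVector (α : ℝ) (p : ℝ × ℝ × ℝ) (a b : ℝ) : ℝ × ℝ × ℝ :=
  (a, b, |p.1| ^ α * b)

variable {α T : ℝ} {γ : ℝ → ℝ × ℝ × ℝ}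

theorem isHorizontal_iff :
    IsHorizontal α T γ ↔ (∃ K, LipschitzOnWith K γ (Icc 0 T)) ∧
      ∃ h₁ h₂ : ℝ → ℝ, Measurable h₁ ∧ Measurable h₂ ∧ (∀ t, h₁ t ^ 2 + h₂ t ^ 2 ≤ 1) ∧
        ∀ᵐ t, t ∈ Ioo 0 T → HasDerivAt γ (horizontalVector α (γ t) (h₁ t) (h₂ t)) t := by
  simp only [IsHorizontal, ae_restrict_iff' measurableSet_Ioo, hasDerivAt_prod_iff,
    horizontalVector]

theorem IsHorizontal.mono {S : ℝ} (hγ : IsHorizontal α T γ) (hST : S ≤ T) :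
    IsHorizontal α S γ := by
  obtain ⟨⟨K, hK⟩, h₁, h₂, hm₁, hm₂, hle, hderiv⟩ := hγ
  exact ⟨⟨K, hK.mono (Icc_subset_Icc_right hST)⟩, h₁, h₂, hm₁, hm₂, hle,
    ae_restrict_of_ae_restrict_of_subset (Ioo_subset_Ioo_right hST) hderiv⟩

theorem IsHorizontal.abs_map_sub_le {M : ℝ} (hγ : IsHorizontal α T γ) (hT : 0 ≤ T)
    (ℓ : ℝ × ℝ × ℝ →L[ℝ] ℝ)
    (hM : ∀ t ∈ Ioo 0 T, ∀ a b : ℝ, a ^ 2 + b ^ 2 ≤ 1 → |ℓ (horizontalVector α (γ t) a b)| ≤ M) :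
    |ℓ (γ T - γ 0)| ≤ M * T := by
  obtain ⟨⟨K, hK⟩, h₁, h₂, -, -, hle, hderiv⟩ := isHorizontal_iff.1 hγ
  have hac : AbsolutelyContinuousOnInterval (ℓ ∘ γ) 0 T := by
    rw [← uIcc_of_le hT] at hK
    exact (ℓ.lipschitz.comp_lipschitzOnWith hK).absolutelyContinuousOnInterval
  have hbound : ∀ᵐ t ∂volume.restrict (uIoc 0 T), |deriv (ℓ ∘ γ) t| ≤ M := by
    rw [uIoc_of_le hT, ← Measure.restrict_congr_set Ioo_ae_eq_Ioc,
      ae_restrict_iff' measurableSet_Ioo]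
    filter_upwards [hderiv] with t hd ht
    rw [(ℓ.hasFDerivAt.comp_hasDerivAt t (hd ht)).deriv]
    exact hM t ht _ _ (hle t)
  simpa [abs_of_nonneg hT] using abs_sub_le_mul_of_ae_abs_deriv_le hac hbound

theorem abs_le_one_of_sq_add_sq_le_one {a b : ℝ} (h : a ^ 2 + b ^ 2 ≤ 1) : |a| ≤ 1 :=
  (sq_le_one_iff_abs_le_one a).1 (by linarith [sq_nonneg b])

theorem IsHorizontal.abs_x_sub_le (hγ : IsHorizontal α T γ) (hT : 0 ≤ T) :
    |(γ T).1 - (γ 0).1| ≤ T := by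
  simpa using hγ.abs_map_sub_le hT (.fst ℝ ℝ (ℝ × ℝ)) (M := 1)
    fun _ _ _ _ h => abs_le_one_of_sq_add_sq_le_one h

theorem IsHorizontal.abs_y_sub_le (hγ : IsHorizontal α T γ) (hT : 0 ≤ T) :
    |(γ T).2.1 - (γ 0).2.1| ≤ T := by
  simpa using hγ.abs_map_sub_le hT ((ContinuousLinearMap.fst ℝ ℝ ℝ).comp (.snd ℝ ℝ (ℝ × ℝ)))
    (M := 1) fun _ _ a b h => abs_le_one_of_sq_add_sq_le_one (by rwa [add_comm] at h)

theorem IsHorizontal.abs_z_defect_le (hα : 1 ≤ α) (hγ : IsHorizontal α T γ) (hT : 0 ≤ T) :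
    |(γ 0).2.2 - (γ T).2.2 + |(γ 0).1| ^ α * ((γ T).2.1 - (γ 0).2.1)|
      ≤ α * (|(γ 0).1| + T) ^ (α - 1) * T * T := by
  set c := |(γ 0).1| ^ α
  let y : ℝ × ℝ × ℝ →L[ℝ] ℝ := (ContinuousLinearMap.fst ℝ ℝ ℝ).comp (.snd ℝ ℝ (ℝ × ℝ))
  let z : ℝ × ℝ × ℝ →L[ℝ] ℝ := (ContinuousLinearMap.snd ℝ ℝ ℝ).comp (.snd ℝ ℝ (ℝ × ℝ))
  convert hγ.abs_map_sub_le hT (c • y - z) fun t ht a b hab => ?_ using 1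
  · congr 1
    simp only [y, z, sub_apply, smul_apply,
      ContinuousLinearMap.comp_apply, ContinuousLinearMap.coe_fst', ContinuousLinearMap.coe_snd',
      Prod.fst_sub, Prod.snd_sub, smul_eq_mul]
    ring
  · have hxt : |(γ t).1 - (γ 0).1| ≤ T :=
      ((hγ.mono ht.2.le).abs_x_sub_le ht.1.le).trans ht.2.le
    have hb : |b| ≤ 1 := abs_le_one_of_sq_add_sq_le_one (by rwa [add_comm] at hab)
    have hx : |(γ t).1| ≤ |(γ 0).1| + T := by
      linarith [abs_sub_abs_le_abs_sub (γ t).1 (γ 0).1]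
    calc |(c • y - z) (horizontalVector α (γ t) a b)|
        = |(|(γ t).1| ^ α - c)| * |b| := by
          rw [abs_sub_comm, ← abs_mul, sub_mul]
          rfl
      _ ≤ α * (|(γ 0).1| + T) ^ (α - 1) * |(γ t).1 - (γ 0).1| * 1 := by
          gcongr
          exact abs_abs_rpow_sub_abs_rpow_le hα hx (by linarith)
      _ ≤ α * (|(γ 0).1| + T) ^ (α - 1) * T := by
          rw [mul_one]
          gcongr

theorem IsHorizontal.deltaDist_le (hα : 1 ≤ α) (hγ : IsHorizontal α T γ) (hT : 0 ≤ T) :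
    deltaDist α (γ 0) (γ T) ≤ (α * 2 ^ (α - 1) + 2) * T := by
  have hmin := ccMin_le_of_abs_le hα hT (hγ.abs_z_defect_le hα hT)
  unfold deltaDist
  linarith [hγ.abs_x_sub_le hT, hγ.abs_y_sub_le hT]

theorem IsHorizontal.concatAt {S : ℝ} {η : ℝ → ℝ × ℝ × ℝ} (hS : 0 ≤ S) (hT : 0 ≤ T)
    (hγ : IsHorizontal α S γ) (hη : IsHorizontal α T η) (h : γ S = η 0) :
    IsHorizontal α (S + T) (concatAt S γ η) := by
  obtain ⟨⟨K, hK⟩, a₁, a₂, ha₁, ha₂, ha, hγ'⟩ := isHorizontal_iff.1 hγ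
  obtain ⟨⟨L, hL⟩, b₁, b₂, hb₁, hb₂, hb, hη'⟩ := isHorizontal_iff.1 hη
  have hshift : Measurable fun t : ℝ => t - S := measurable_id.sub_const S
  refine isHorizontal_iff.2 ⟨⟨K + L, lipschitzOnWith_concatAt hS hT hK hL⟩,
    fun t => if t ≤ S then a₁ t else b₁ (t - S), fun t => if t ≤ S then a₂ t else b₂ (t - S),
    ha₁.ite measurableSet_Iic (hb₁.comp hshift), ha₂.ite measurableSet_Iic (hb₂.comp hshift),
    fun t => ?_, ?_⟩
  · dsimp only
    split_ifs
    exacts [ha t, hb (t - S)]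
  · filter_upwards [hγ', (measurePreserving_sub_right volume S).quasiMeasurePreserving.ae hη',
      Measure.ae_ne volume S] with t hγt hηt hne ht
    rcases hne.lt_or_gt with hlt | hgt
    · simpa only [if_pos hlt.le, concatAt_of_le hlt.le] using
        hasDerivAt_concatAt_of_lt hlt (hγt ⟨ht.1, hlt⟩)
    · simpa only [if_neg hgt.not_ge, concatAt_of_ge h hgt.le] using
        hasDerivAt_concatAt_of_gt h hgt (hηt ⟨by linarith, by linarith [ht.2]⟩)

theorem isHorizontal_line {a b : ℝ} (p : ℝ × ℝ × ℝ) (T : ℝ) (hab : a ^ 2 + b ^ 2 ≤ 1)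
    (h : a = 0 ∨ b = 0) : IsHorizontal α T fun t => p + t • horizontalVector α p a b := by
  have hderiv (t : ℝ) : HasDerivAt (fun t : ℝ => p + t • horizontalVector α p a b)
      (horizontalVector α p a b) t := by
    simpa using ((hasDerivAt_id t).smul_const (horizontalVector α p a b)).const_add p
  have hconst (t : ℝ) : horizontalVector α (p + t • horizontalVector α p a b) a b =
      horizontalVector α p a b := by
    rcases h with rfl | rfl <;> simp [horizontalVector]
  refine isHorizontal_iff.2 ⟨⟨‖horizontalVector α p a b‖₊, ?_⟩, fun _ => a, fun _ => b,
    measurable_const, measurable_const, fun _ => hab, .of_forall fun t _ => ?_⟩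
  · exact LipschitzOnWith.of_dist_le_mul fun s _ t _ => by
      simp [dist_eq_norm, ← sub_smul, norm_smul, mul_comm]
  · simpa only [hconst] using hderiv t

end HorizontalCurves

section Reachability

/-- Every duration `T > L` is realised by a horizontal curve from `p` to `q`, so that `L` bounds
the distance from `p` to `q`. The strict inequality allows `L = 0` when `p = q` and makes
the bounds `L` add up under concatenation. -/
def ReachableAfter (α L : ℝ) (p q : ℝ × ℝ × ℝ) : Prop :=
  0 ≤ L ∧ ∀ T, L < T → ∃ γ : ℝ → ℝ × ℝ × ℝ, IsHorizontal α T γ ∧ γ 0 = p ∧ γ T = q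

variable {α L : ℝ} {p q : ℝ × ℝ × ℝ}

theorem ReachableAfter.mono {L' : ℝ} (h : ReachableAfter α L p q) (hL : L ≤ L') :
    ReachableAfter α L' p q :=
  ⟨h.1.trans hL, fun T hT => h.2 T (hL.trans_lt hT)⟩

theorem ReachableAfter.trans {L' : ℝ} {o : ℝ × ℝ × ℝ} (h : ReachableAfter α L p q)
    (h' : ReachableAfter α L' q o) : ReachableAfter α (L + L') p o := by
  refine ⟨add_nonneg h.1 h'.1, fun T hT => ?_⟩
  obtain ⟨S, hLS, hST⟩ := exists_between (lt_sub_iff_add_lt.2 hT)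
  obtain ⟨γ, hγ, rfl, hγq⟩ := h.2 S hLS
  obtain ⟨η, hη, rfl, rfl⟩ := h'.2 (T - S) (by linarith)
  have hS : 0 ≤ S := h.1.trans hLS.le
  have hST' : S ≤ T := by linarith [h'.1]
  refine ⟨concatAt S γ η, ?_, concatAt_of_le hS, concatAt_of_ge hγq hST'⟩
  simpa using hγ.concatAt hS (sub_nonneg.2 hST') hη hγq

theorem ReachableAfter.ccDist_le (h : ReachableAfter α L p q) : ccDist α p q ≤ L :=
  le_of_forall_gt_imp_ge_of_dense fun T hT =>
    csInf_le ⟨0, fun _ hS => hS.1.le⟩ ⟨h.1.trans_lt hT, h.2 T hT⟩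

theorem reachableAfter_x (α x x' y z : ℝ) :
    ReachableAfter α |x' - x| (x, y, z) (x', y, z) := by
  refine ⟨abs_nonneg _, fun T hT => ?_⟩
  have hT0 : 0 < T := (abs_nonneg _).trans_lt hT
  have hspeed : ((x' - x) / T) ^ 2 + (0 : ℝ) ^ 2 ≤ 1 := by
    rw [zero_pow two_ne_zero, add_zero, sq_le_one_iff_abs_le_one, abs_div, abs_of_pos hT0]
    exact (div_le_one hT0).2 hT.le
  refine ⟨_, isHorizontal_line (x, y, z) T hspeed (.inr rfl), by simp, ?_⟩
  simp [horizontalVector, mul_div_cancel₀ _ hT0.ne']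

theorem reachableAfter_y (α x y z s : ℝ) :
    ReachableAfter α |s| (x, y, z) (x, y + s, z + |x| ^ α * s) := by
  refine ⟨abs_nonneg _, fun T hT => ?_⟩
  have hT0 : 0 < T := (abs_nonneg _).trans_lt hT
  have hspeed : (0 : ℝ) ^ 2 + (s / T) ^ 2 ≤ 1 := by
    rw [zero_pow two_ne_zero, zero_add, sq_le_one_iff_abs_le_one, abs_div, abs_of_pos hT0]
    exact (div_le_one hT0).2 hT.le
  refine ⟨_, isHorizontal_line (x, y, z) T hspeed (.inl rfl), by simp, ?_⟩
  simp [horizontalVector, mul_left_comm T, mul_div_cancel₀ _ hT0.ne']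

theorem reachableAfter_loop (α x y z r s : ℝ) :
    ReachableAfter α (2 * (|r| + |s|)) (x, y, z)
      (x, y, z + (|x + r| ^ α - |x| ^ α) * s) := by
  have right := reachableAfter_x α x (x + r) y z
  have up := reachableAfter_y α (x + r) y z s
  have left := reachableAfter_x α (x + r) x (y + s) (z + |x + r| ^ α * s)
  have down := reachableAfter_y α x (y + s) (z + |x + r| ^ α * s) (-s)
  convert ((right.trans up).trans left).trans down using 1
  · simp only [add_sub_cancel_left, sub_add_cancel_left, abs_neg]
    ring
  · ring_nf

theorem reachableAfter_z (hα : 1 ≤ α) (x y z ζ : ℝ) :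
    ReachableAfter α (4 * ccMin α x ζ) (x, y, z) (x, y, z - ζ) := by
  set m := ccMin α x ζ
  have hm : 0 ≤ m := ccMin_nonneg α x ζ
  obtain ⟨r, hr, hxr⟩ : ∃ r, |r| = m ∧ |x + r| = |x| + m := by
    rcases le_total 0 x with hx | hx
    · exact ⟨m, abs_of_nonneg hm, by rw [abs_of_nonneg hx, abs_of_nonneg (by linarith)]⟩
    · exact ⟨-m, by rw [abs_neg, abs_of_nonneg hm], by
        rw [abs_of_nonpos hx, abs_of_nonpos (by linarith)]; ring⟩
  set D := |x + r| ^ α - |x| ^ α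
  have hmD : m * max m |x| ^ (α - 1) ≤ D := by
    simpa only [D, hxr] using mul_max_rpow_le_add_rpow_sub_rpow hα (abs_nonneg x) hm
  have hD : 0 ≤ D := le_trans (by positivity) hmD
  have hζ : |ζ| ≤ m * D :=
    calc |ζ| ≤ m ^ 2 * max m |x| ^ (α - 1) := (ccMin_le_iff hα hm).1 le_rfl
      _ = m * (m * max m |x| ^ (α - 1)) := by ring
      _ ≤ m * D := by gcongr
  have hs : |-ζ / D| ≤ m := by
    rw [abs_div, abs_neg, abs_of_nonneg hD]
    exact div_le_of_le_mul₀ hD hm hζ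
  have hDs : D * (-ζ / D) = -ζ :=
    mul_div_cancel_of_imp' fun h => by simpa [h] using hζ
  have hloop := reachableAfter_loop α x y z r (-ζ / D)
  rw [hDs, ← sub_eq_add_neg] at hloop
  exact hloop.mono (by linarith)

theorem reachableAfter_deltaDist (hα : 1 ≤ α) (p q : ℝ × ℝ × ℝ) :
    ReachableAfter α (4 * deltaDist α p q) p q := by
  obtain ⟨x, y, z⟩ := p
  obtain ⟨x', y', z'⟩ := q
  set ζ := z - z' + |x| ^ α * (y' - y) with hζ
  have along_y := reachableAfter_y α x y z (y' - y)
  have along_z := reachableAfter_z hα x (y + (y' - y)) (z + |x| ^ α * (y' - y)) ζ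
  have along_x := reachableAfter_x α x x' y' z'
  have hy : y + (y' - y) = y' := by ring
  have hz : z + |x| ^ α * (y' - y) - ζ = z' := by rw [hζ]; ring
  rw [hy] at along_y along_z
  rw [hz] at along_z
  refine ((along_y.trans along_z).trans along_x).mono ?_
  simp only [deltaDist, ← hζ]
  linarith [abs_nonneg (x' - x), abs_nonneg (y' - y)]

theorem ccDist_nonneg (α : ℝ) (p q : ℝ × ℝ × ℝ) : 0 ≤ ccDist α p q :=
  Real.sInf_nonneg fun _ hT => hT.1.le

theorem ccDist_le_four_mul_deltaDist (hα : 1 ≤ α) (p q : ℝ × ℝ × ℝ) :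
    ccDist α p q ≤ 4 * deltaDist α p q :=
  (reachableAfter_deltaDist hα p q).ccDist_le

theorem deltaDist_le_mul_ccDist (hα : 1 ≤ α) (p q : ℝ × ℝ × ℝ) :
    deltaDist α p q ≤ (α * 2 ^ (α - 1) + 2) * ccDist α p q := by
  obtain ⟨hL, hreach⟩ := reachableAfter_deltaDist hα p q
  rw [← div_le_iff₀' (by positivity)]
  refine le_csInf ⟨_, by linarith, hreach _ (lt_add_one _)⟩ ?_
  rintro T ⟨hT, γ, hγ, rfl, rfl⟩
  rw [div_le_iff₀' (by positivity)]
  exact hγ.deltaDist_le hα hT.le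

end Reachability

/-- Theorem 2 (structure of the metric): the CC distance is globally equivalent
to the algebraic quasi-distance `δ`. -/
theorem ccDist_equiv_deltaDist (α : ℝ) (hα : 1 ≤ α) :
    ∃ C₀ : ℝ, 0 < C₀ ∧ ∀ p q : ℝ × ℝ × ℝ,
      C₀⁻¹ * deltaDist α p q ≤ ccDist α p q ∧ ccDist α p q ≤ C₀ * deltaDist α p q := by
  have hC : 0 < α * 2 ^ (α - 1) + 4 := by positivity
  refine ⟨α * 2 ^ (α - 1) + 4, hC, fun p q => ⟨?_, ?_⟩⟩
  · rw [inv_mul_le_iff₀ hC]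
    calc deltaDist α p q ≤ (α * 2 ^ (α - 1) + 2) * ccDist α p q := deltaDist_le_mul_ccDist hα p q
      _ ≤ (α * 2 ^ (α - 1) + 4) * ccDist α p q := by
        have := ccDist_nonneg α p q
        gcongr
        norm_num
  · calc ccDist α p q ≤ 4 * deltaDist α p q := ccDist_le_four_mul_deltaDist hα p q
      _ ≤ (α * 2 ^ (α - 1) + 4) * deltaDist α p q := by
        have := deltaDist_nonneg α p q
        gcongr
        exact le_add_of_nonneg_left (by positivity)
end

section
/- Let α ≥ 1. There exists a constant C_α > 0 such that for every T > 0 and every Lipschitz curve γ = (x(·),y(·),z(·)) : [0,T] → ℝ³ with x′(t) = h₁(t), y′(t) = h₂(t), z′(t) = |x(t)|^α h₂(t) a.e. for measurable controls satisfying h₁(t)² + h₂(t)² ≤ 1, one has | z(T) − z(0) − |x(0)|^α ( y(T) − y(0) ) | ≤ C_α ( |x(0)|^{α−1} T² + T^{α+1} ). -/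
open MeasureTheory

/-!
Sub-unit speed confines `x(s)` to the ball of radius `T` about `x(0)`. The curve
`w(s) = z(s) - ‖x(0)‖^α y(s)` has velocity `(‖x(s)‖^α - ‖x(0)‖^α) h₂(s)`, whose norm is at most
`α (‖x(0)‖ + T)^(α-1) T` by the mean value inequality for `r ↦ r^α`. Integrating over `[0, T]` and
splitting the power of the sum gives the estimate.
-/

theorem abs_sub_le_of_absolutelyContinuousOnInterval_of_ae_abs_deriv_le {f f' : ℝ → ℝ}
    {a b C : ℝ} (hab : a ≤ b) (hf : AbsolutelyContinuousOnInterval f a b)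
    (hderiv : ∀ᵐ t ∂(volume.restrict (Set.Ioo a b)), HasDerivAt f (f' t) t)
    (hbound : ∀ᵐ t ∂(volume.restrict (Set.Ioo a b)), |f' t| ≤ C) :
    |f b - f a| ≤ C * (b - a) := by
  have hderiv_le : ∀ᵐ t ∂(volume.restrict (Set.uIoc a b)), ‖deriv f t‖ ≤ C := by
    rw [Set.uIoc_of_le hab, ← Measure.restrict_congr_set Ioo_ae_eq_Ioc]
    filter_upwards [hderiv, hbound] with t ht htC
    rwa [ht.deriv]
  rw [← hf.integral_deriv_eq_sub, ← abs_of_nonneg (sub_nonneg.2 hab)]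
  exact intervalIntegral.norm_integral_le_of_norm_le_const_ae
    ((ae_restrict_iff' measurableSet_uIoc).1 hderiv_le)

theorem abs_rpow_sub_rpow_le {p a b c : ℝ} (hp : 1 ≤ p) (ha : a ∈ Set.Icc 0 c)
    (hb : b ∈ Set.Icc 0 c) : |b ^ p - a ^ p| ≤ p * c ^ (p - 1) * |b - a| := by
  refine (convex_Icc 0 c).norm_image_sub_le_of_norm_hasDerivWithin_le
    (fun r _ => (Real.hasDerivAt_rpow_const (Or.inr hp)).hasDerivWithinAt) (fun r hr => ?_) ha hb
  rw [Real.norm_of_nonneg (mul_nonneg (by linarith) (Real.rpow_nonneg hr.1 _))]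
  have : r ^ (p - 1) ≤ c ^ (p - 1) := Real.rpow_le_rpow hr.1 hr.2 (by linarith)
  gcongr

theorem add_rpow_le_two_rpow_mul {p a b : ℝ} (hp : 0 ≤ p) (ha : 0 ≤ a) (hb : 0 ≤ b) :
    (a + b) ^ p ≤ 2 ^ p * (a ^ p + b ^ p) :=
  calc (a + b) ^ p ≤ (2 * max a b) ^ p := by
        gcongr
        linarith [le_max_left a b, le_max_right a b]
    _ = 2 ^ p * max (a ^ p) (b ^ p) := by
        rw [Real.mul_rpow zero_le_two (le_max_of_le_left ha), Real.rpow_max ha hb hp]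
    _ ≤ 2 ^ p * (a ^ p + b ^ p) := by
        gcongr
        exact max_le_add_of_nonneg (Real.rpow_nonneg ha p) (Real.rpow_nonneg hb p)

theorem abs_norm_rpow_sub_norm_rpow_le {E : Type*} [SeminormedAddCommGroup E] {p r : ℝ} {u v : E}
    (hp : 1 ≤ p) (huv : ‖u - v‖ ≤ r) :
    |‖u‖ ^ p - ‖v‖ ^ p| ≤ p * (‖v‖ + r) ^ (p - 1) * r := by
  have hr : 0 ≤ r := (norm_nonneg _).trans huv
  have hu : ‖u‖ ≤ ‖v‖ + r := by linarith [norm_sub_norm_le u v]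
  calc |‖u‖ ^ p - ‖v‖ ^ p| ≤ p * (‖v‖ + r) ^ (p - 1) * |‖u‖ - ‖v‖| :=
        abs_rpow_sub_rpow_le hp ⟨norm_nonneg v, by linarith⟩ ⟨norm_nonneg u, hu⟩
    _ ≤ p * (‖v‖ + r) ^ (p - 1) * r := by
        gcongr
        exact (abs_norm_sub_norm_le u v).trans huv

section NormedSpace

variable {E F : Type*} [NormedAddCommGroup E] [NormedSpace ℝ E]
  [NormedAddCommGroup F] [NormedSpace ℝ F]

-- Composing with a norming functional reduces to the scalar fundamental theorem of calculus.
theorem norm_sub_le_of_lipschitzOnWith_of_ae_norm_deriv_le {f f' : ℝ → F} {a b C : ℝ}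
    {K : NNReal} (hab : a ≤ b) (hf : LipschitzOnWith K f (Set.Icc a b))
    (hderiv : ∀ᵐ t ∂(volume.restrict (Set.Ioo a b)), HasDerivAt f (f' t) t)
    (hbound : ∀ᵐ t ∂(volume.restrict (Set.Ioo a b)), ‖f' t‖ ≤ C) :
    ‖f b - f a‖ ≤ C * (b - a) := by
  obtain ⟨φ, hφ, hφ_eq⟩ := exists_dual_vector'' ℝ (f b - f a)
  have hφf : AbsolutelyContinuousOnInterval (φ ∘ f) a b := by
    refine LipschitzOnWith.absolutelyContinuousOnInterval (K := ‖φ‖₊ * K) ?_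
    rw [Set.uIcc_of_le hab]
    exact φ.lipschitz.comp_lipschitzOnWith hf
  have hφ_bound : ∀ᵐ t ∂(volume.restrict (Set.Ioo a b)), |φ (f' t)| ≤ C := by
    filter_upwards [hbound] with t ht
    exact (φ.le_of_opNorm_le hφ (f' t)).trans (by rwa [one_mul])
  calc ‖f b - f a‖ = φ (f b) - φ (f a) := by rw [← map_sub, hφ_eq]; rfl
    _ ≤ |φ (f b) - φ (f a)| := le_abs_self _
    _ ≤ C * (b - a) := abs_sub_le_of_absolutelyContinuousOnInterval_of_ae_abs_deriv_le hab hφf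
        (hderiv.mono fun t ht => φ.hasFDerivAt.comp_hasDerivAt t ht) hφ_bound

/-- Lipschitz curves `(x, y, z) : [0, T] → E × F × F` tangent to the distribution spanned by `∂ₓ`
and `∂_y + f(x) ∂_z`, with controls `h₁`, `h₂`. Each control is required to lie in a unit ball
separately; for `E = F = ℝ` this allows more controls than `h₁² + h₂² ≤ 1` does. -/
structure IsSubunitHorizontalCurve (f : E → ℝ) (T : ℝ) (x : ℝ → E) (y z : ℝ → F)
    (h₁ : ℝ → E) (h₂ : ℝ → F) : Prop where
  lipschitz : ∃ K, LipschitzOnWith K (fun t => (x t, y t, z t)) (Set.Icc 0 T)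
  ae_norm_le_one : ∀ᵐ t ∂(volume.restrict (Set.Ioo 0 T)), ‖h₁ t‖ ≤ 1 ∧ ‖h₂ t‖ ≤ 1
  ae_hasDerivAt : ∀ᵐ t ∂(volume.restrict (Set.Ioo 0 T)),
    HasDerivAt x (h₁ t) t ∧ HasDerivAt y (h₂ t) t ∧ HasDerivAt z (f (x t) • h₂ t) t

namespace IsSubunitHorizontalCurve

variable {f : E → ℝ} {T : ℝ} {x : ℝ → E} {y z : ℝ → F} {h₁ : ℝ → E} {h₂ : ℝ → F}

theorem mono {S : ℝ} (hγ : IsSubunitHorizontalCurve f T x y z h₁ h₂) (hST : S ≤ T) :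
    IsSubunitHorizontalCurve f S x y z h₁ h₂ where
  lipschitz := hγ.lipschitz.imp fun _ hK => hK.mono (Set.Icc_subset_Icc_right hST)
  ae_norm_le_one :=
    ae_restrict_of_ae_restrict_of_subset (Set.Ioo_subset_Ioo_right hST) hγ.ae_norm_le_one
  ae_hasDerivAt :=
    ae_restrict_of_ae_restrict_of_subset (Set.Ioo_subset_Ioo_right hST) hγ.ae_hasDerivAt

theorem norm_horizontal_sub_le (hγ : IsSubunitHorizontalCurve f T x y z h₁ h₂) (hT : 0 ≤ T) :
    ‖x T - x 0‖ ≤ T := by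
  obtain ⟨K, hK⟩ := hγ.lipschitz
  have hx : LipschitzOnWith (1 * K) x (Set.Icc 0 T) :=
    LipschitzWith.prod_fst.comp_lipschitzOnWith hK
  simpa only [one_mul, sub_zero] using norm_sub_le_of_lipschitzOnWith_of_ae_norm_deriv_le hT hx
    (hγ.ae_hasDerivAt.mono fun _ h => h.1) (hγ.ae_norm_le_one.mono fun _ h => h.1)

theorem norm_vertical_sub_le {M : ℝ} (hγ : IsSubunitHorizontalCurve f T x y z h₁ h₂)
    (hT : 0 ≤ T) (hosc : ∀ u, ‖u - x 0‖ ≤ T → |f u - f (x 0)| ≤ M) :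
    ‖z T - z 0 - f (x 0) • (y T - y 0)‖ ≤ M * T := by
  obtain ⟨K, hK⟩ := hγ.lipschitz
  have hyz := LipschitzWith.prod_snd.comp_lipschitzOnWith hK
  have hy := LipschitzWith.prod_fst.comp_lipschitzOnWith hyz
  have hz := LipschitzWith.prod_snd.comp_lipschitzOnWith hyz
  obtain ⟨L, hw⟩ : ∃ L, LipschitzOnWith L (fun s => z s - f (x 0) • y s) (Set.Icc 0 T) :=
    ⟨_, hz.sub ((lipschitzWith_smul (f (x 0))).comp_lipschitzOnWith hy)⟩
  have hw_deriv : ∀ᵐ t ∂(volume.restrict (Set.Ioo 0 T)),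
      HasDerivAt (fun s => z s - f (x 0) • y s) ((f (x t) - f (x 0)) • h₂ t) t := by
    filter_upwards [hγ.ae_hasDerivAt] with t ⟨_, hyt, hzt⟩
    rw [sub_smul]
    exact hzt.sub (hyt.const_smul _)
  have hw_bound : ∀ᵐ t ∂(volume.restrict (Set.Ioo 0 T)), ‖(f (x t) - f (x 0)) • h₂ t‖ ≤ M := by
    filter_upwards [hγ.ae_norm_le_one, ae_restrict_mem measurableSet_Ioo] with t ⟨_, ht₂⟩ ht
    rw [norm_smul]
    exact (mul_le_of_le_one_right (norm_nonneg _) ht₂).trans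
      (hosc (x t) (((hγ.mono ht.2.le).norm_horizontal_sub_le ht.1.le).trans ht.2.le))
  calc ‖z T - z 0 - f (x 0) • (y T - y 0)‖
      = ‖(z T - f (x 0) • y T) - (z 0 - f (x 0) • y 0)‖ := by
        rw [smul_sub, sub_sub_sub_comm]
    _ ≤ M * T := by
        simpa only [sub_zero] using
          norm_sub_le_of_lipschitzOnWith_of_ae_norm_deriv_le hT hw hw_deriv hw_bound

end IsSubunitHorizontalCurve

theorem horizontal_vertical_estimate_general {α T : ℝ} {x : ℝ → E} {y z : ℝ → F} {h₁ : ℝ → E}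
    {h₂ : ℝ → F} (hα : 1 ≤ α) (hT : 0 ≤ T)
    (hγ : IsSubunitHorizontalCurve (fun u => ‖u‖ ^ α) T x y z h₁ h₂) :
    ‖z T - z 0 - ‖x 0‖ ^ α • (y T - y 0)‖ ≤
      α * 2 ^ (α - 1) * (‖x 0‖ ^ (α - 1) * T ^ 2 + T ^ (α + 1)) := by
  have hα' : 0 ≤ α - 1 := sub_nonneg.2 hα
  have hTpow : T ^ (α + 1) = T ^ (α - 1) * T ^ 2 := by
    rw [← Real.rpow_two, ← Real.rpow_add_of_nonneg hT hα' zero_le_two]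
    ring_nf
  calc ‖z T - z 0 - ‖x 0‖ ^ α • (y T - y 0)‖
      ≤ α * (‖x 0‖ + T) ^ (α - 1) * T * T :=
        hγ.norm_vertical_sub_le hT fun _ => abs_norm_rpow_sub_norm_rpow_le hα
    _ ≤ α * (2 ^ (α - 1) * (‖x 0‖ ^ (α - 1) + T ^ (α - 1))) * T * T := by
        gcongr
        exact add_rpow_le_two_rpow_mul hα' (norm_nonneg _) hT
    _ = α * 2 ^ (α - 1) * (‖x 0‖ ^ (α - 1) * T ^ 2 + T ^ (α + 1)) := by
        rw [hTpow]
        ring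

end NormedSpace

/-- Along any horizontal curve for `X₁ = ∂ₓ`, `X₂ = ∂_y + |x|^α ∂_z` with sub-unit
controls, the vertical displacement relative to `|x(0)|^α (y(T) - y(0))` is controlled
by `|x(0)|^{α-1} T² + T^{α+1}`. -/
theorem horizontal_vertical_estimate (α : ℝ) (hα : 1 ≤ α) :
    ∃ C : ℝ, 0 < C ∧ ∀ T : ℝ, 0 < T → ∀ x y z h₁ h₂ : ℝ → ℝ,
      (∃ K, LipschitzOnWith K (fun t => (x t, y t, z t)) (Set.Icc 0 T)) →
      Measurable h₁ → Measurable h₂ →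
      (∀ t, (h₁ t) ^ 2 + (h₂ t) ^ 2 ≤ 1) →
      (∀ᵐ t ∂(volume.restrict (Set.Ioo 0 T)),
        HasDerivAt x (h₁ t) t ∧ HasDerivAt y (h₂ t) t ∧
          HasDerivAt z (|x t| ^ α * h₂ t) t) →
      |z T - z 0 - |x 0| ^ α * (y T - y 0)| ≤
        C * (|x 0| ^ (α - 1) * T ^ 2 + T ^ (α + 1)) := by
  refine ⟨α * 2 ^ (α - 1), by positivity, fun T hT x y z h₁ h₂ hLip _ _ hh hderiv =>
    horizontal_vertical_estimate_general hα hT.le ⟨hLip, .of_forall fun t => ⟨?_, ?_⟩, hderiv⟩⟩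
  · exact (sq_le_one_iff_abs_le_one _).1 (by linarith [hh t, sq_nonneg (h₂ t)])
  · exact (sq_le_one_iff_abs_le_one _).1 (by linarith [hh t, sq_nonneg (h₁ t)])
end
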